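/- Let k ≥ 1 and let P, P' be database properties. Suppose that for every x = (x_1,…,x_k) ∈ X^k with pairwise distinct entries and every D ∈ DB there are sets S_1^{x,D}, …, S_k^{x,D} ⊆ Ȳ, each satisfying (⊥ ∈ S_i^{x,D} implies S_i^{x,D} = Ȳ), such that for all r ∈ Ȳ^k: (i) if D[x↦r] ∈ P' then r_i ∈ S_i^{x,D} for some i, and (ii) if r_i ∈ S_i^{x,D} for some i then D[x↦r] ∈ P. Then ⟦¬P → P'⟧_k ≤ max over all such x and D of √(10 · Σ_{i=1}^{k} ρ_i^{x,D}), where ρ_i^{x,D} := |S_i^{x,D} ∩ Y|/M if S_i^{x,D} is neither empty nor all of Ȳ, and ρ_i^{x,D} := 0 otherwise. -/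

import Mathlib

noncomputable section

/- `Ȳ = Y ∪ {⊥}` is modeled by `Option Y` (`⊥ = none`), databases by `X → Option Y`,
and `ℂ[DB]` by `EuclideanSpace ℂ (X → Option Y)`. -/

/-- matrix (in the computational basis) of the single-register unitary `Comp` -/
def compMat (Y : Type*) [Fintype Y] [DecidableEq Y] :
    Matrix (Option Y) (Option Y) ℂ :=
  Matrix.of fun u v =>
    match u, v with
    | none, none => 0
    | some _, none => ((Real.sqrt (Fintype.card Y) : ℝ) : ℂ)⁻¹
    | none, some _ => ((Real.sqrt (Fintype.card Y) : ℝ) : ℂ)⁻¹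
    | some a, some b => (if a = b then (1 : ℂ) else 0) - ((Fintype.card Y : ℕ) : ℂ)⁻¹

/-- matrix of the diagonal unitary `O_ŷ` associated to a character `ŷ` of `Y` -/
def oMat {Y : Type*} [Fintype Y] [DecidableEq Y] [AddCommGroup Y] (c : AddChar Y ℂ) :
    Matrix (Option Y) (Option Y) ℂ :=
  Matrix.diagonal fun u => Option.elim u 1 fun r => c r

/-- matrix of the single-register compressed oracle `cO_ŷ = Comp ∘ O_ŷ ∘ Comp` -/
def cOMat {Y : Type*} [Fintype Y] [DecidableEq Y] [AddCommGroup Y] (c : AddChar Y ℂ) :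
    Matrix (Option Y) (Option Y) ℂ :=
  compMat Y * oMat c * compMat Y

/-- a single-register operator (given by its matrix `m`) acting at register `x0` -/
def liftMat {X Y : Type*} [Fintype X] [DecidableEq X] [DecidableEq Y] (x0 : X)
    (m : Matrix (Option Y) (Option Y) ℂ) :
    Matrix (X → Option Y) (X → Option Y) ℂ :=
  Matrix.of fun D' D => if ∀ a, a ≠ x0 → D' a = D a then m (D' x0) (D x0) else 0

/-- matrix of `cO_{x,ŷ}`: the composition of `cO_{ŷ i}` acting at register `x i` -/
def cOparMat {X Y : Type*} [Fintype X] [DecidableEq X] [Fintype Y] [DecidableEq Y]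
    [AddCommGroup Y] {k : ℕ} (x : Fin k → X) (c : Fin k → AddChar Y ℂ) :
    Matrix (X → Option Y) (X → Option Y) ℂ :=
  (List.ofFn fun i : Fin k => liftMat (x i) (cOMat (c i))).prod

/-- matrix of the orthogonal projection onto `span{e_D : D ∈ P}` -/
def projMat {ι : Type*} [DecidableEq ι] (P : Set ι) : Matrix ι ι ℂ := by
  classical exact Matrix.of fun i j => if i = j ∧ i ∈ P then 1 else 0

/-- the (continuous linear) operator on `ℓ²` given by a matrix -/
def toOp {ι : Type*} [Fintype ι] [DecidableEq ι] (m : Matrix ι ι ℂ) :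
    EuclideanSpace ℂ ι →L[ℂ] EuclideanSpace ℂ ι :=
  LinearMap.toContinuousLinearMap (Matrix.toEuclideanLin m)

/-- `D|^x`: the set of databases that coincide with `D` outside of `x` -/
def agreeOff {X Y : Type*} {k : ℕ} (D : X → Option Y) (x : Fin k → X) :
    Set (X → Option Y) :=
  {D' | ∀ a : X, (∀ i, x i ≠ a) → D' a = D a}

/-- The quantum transition capacity `⟦P → P' | X₀⟧_k`: the supremum, over all `x ∈ X₀^k`
with pairwise distinct entries, all `k`-tuples `ŷ` of characters of `Y` and all databases `D`,
of `‖P'|_{D|^x} ∘ cO_{x,ŷ} ∘ P|_{D|^x}‖` (`0` if the range is empty). -/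
def qtc {X Y : Type*} [Fintype X] [DecidableEq X] [Fintype Y] [DecidableEq Y]
    [AddCommGroup Y] (P P' : Set (X → Option Y)) (k : ℕ) (X₀ : Set X) : ℝ :=
  sSup {v : ℝ | ∃ (x : Fin k → X) (c : Fin k → AddChar Y ℂ) (D : X → Option Y),
    Function.Injective x ∧ (∀ i, x i ∈ X₀) ∧
    v = ‖(toOp (projMat (P' ∩ agreeOff D x))).comp
          ((toOp (cOparMat x c)).comp (toOp (projMat (P ∩ agreeOff D x))))‖}

end

/- `D[x↦r]`: the database redefined at the pairwise distinct points `x i` by values `r i` -/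
open Classical in
noncomputable def dbUpdate {X Y : Type*} {k : ℕ} (D : X → Option Y)
    (x : Fin k → X) (r : Fin k → Option Y) : X → Option Y :=
  fun a => if h : ∃ i, x i = a then r h.choose else D a

section TransitionCapacityBounds

open scoped Matrix.Norms.L2Operator

section Projections

variable {ι : Type*} [DecidableEq ι]

theorem projMat_apply (P : Set ι) (i j : ι) [Decidable (i = j ∧ i ∈ P)] :
    projMat P i j = if i = j ∧ i ∈ P then (1 : ℂ) else 0 := by
  simp only [projMat, Matrix.of_apply]
  congr

variable [Fintype ι]

open Classical in
theorem projMat_mul_apply (P : Set ι) (A : Matrix ι ι ℂ) (i j : ι) :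
    (projMat P * A) i j = if i ∈ P then A i j else 0 := by
  simp [Matrix.mul_apply, projMat_apply, ite_and]

open Classical in
theorem mul_projMat_apply (P : Set ι) (A : Matrix ι ι ℂ) (i j : ι) :
    (A * projMat P) i j = if j ∈ P then A i j else 0 := by
  rw [Matrix.mul_apply, Finset.sum_eq_single j]
  · simp [projMat_apply]
  · intro b _ hb
    simp [projMat_apply, hb]
  · simp

theorem projMat_mul_projMat_of_subset {P Q : Set ι} (h : P ⊆ Q) :
    projMat Q * projMat P = projMat P := by
  classical
  ext i j
  rw [projMat_mul_apply, projMat_apply]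
  by_cases hP : i ∈ P
  · simp [h hP]
  · simp [hP]

theorem toOp_mul (A B : Matrix ι ι ℂ) : toOp (A * B) = (toOp A).comp (toOp B) := by
  ext ψ : 1
  simp [toOp, Matrix.toLpLin_apply, Matrix.mulVec_mulVec]

theorem norm_toOp (A : Matrix ι ι ℂ) : ‖toOp A‖ = ‖A‖ := rfl

open Classical in
theorem toOp_projMat_mul_apply (P : Set ι) (A : Matrix ι ι ℂ) (ψ : EuclideanSpace ℂ ι) (i : ι) :
    toOp (projMat P * A) ψ i = if i ∈ P then toOp A ψ i else 0 := by
  simp only [toOp, LinearMap.coe_toContinuousLinearMap', Matrix.toLpLin_apply, Matrix.mulVec,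
    dotProduct, projMat_mul_apply]
  split_ifs <;> simp

theorem norm_projMat_le_one (P : Set ι) : ‖projMat P‖ ≤ 1 := by
  classical
  rw [← norm_toOp]
  refine ContinuousLinearMap.opNorm_le_bound _ zero_le_one fun ψ => ?_
  rw [one_mul, ← sq_le_sq₀ (norm_nonneg _) (norm_nonneg _), EuclideanSpace.norm_sq_eq,
    EuclideanSpace.norm_sq_eq]
  refine Finset.sum_le_sum fun i _ => ?_
  rw [← mul_one (projMat P), toOp_projMat_mul_apply]
  have h : toOp (1 : Matrix ι ι ℂ) ψ = ψ := by simp [toOp]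
  rw [h]
  split_ifs <;> simp

theorem norm_le_one_of_mem_unitary {U : Matrix ι ι ℂ} (hU : U ∈ unitary (Matrix ι ι ℂ)) :
    ‖U‖ ≤ 1 := by
  nontriviality Matrix ι ι ℂ
  exact (CStarRing.norm_of_mem_unitary hU).le

/-- A projection onto part of a union is controlled by the projections onto the parts. -/
theorem sq_norm_projMat_mul_le_sum {κ : Type*} [Fintype κ] (P : Set ι) (Q : κ → Set ι)
    (h : P ⊆ ⋃ a, Q a) (A : Matrix ι ι ℂ) :
    ‖projMat P * A‖ ^ 2 ≤ ∑ a, ‖projMat (Q a) * A‖ ^ 2 := by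
  classical
  have h0 : 0 ≤ ∑ a, ‖projMat (Q a) * A‖ ^ 2 := Finset.sum_nonneg fun _ _ => sq_nonneg _
  rw [← Real.le_sqrt (norm_nonneg _) h0, ← norm_toOp]
  refine ContinuousLinearMap.opNorm_le_bound _ (Real.sqrt_nonneg _) fun ψ => ?_
  rw [← sq_le_sq₀ (norm_nonneg _) (by positivity), mul_pow, Real.sq_sqrt h0]
  calc ‖toOp (projMat P * A) ψ‖ ^ 2 ≤ ∑ a, ‖toOp (projMat (Q a) * A) ψ‖ ^ 2 := by
        simp only [EuclideanSpace.norm_sq_eq]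
        rw [Finset.sum_comm]
        refine Finset.sum_le_sum fun i _ => ?_
        by_cases hi : i ∈ P
        · obtain ⟨a, ha⟩ := Set.mem_iUnion.1 (h hi)
          refine le_trans ?_ (Finset.single_le_sum
            (f := fun a => ‖toOp (projMat (Q a) * A) ψ i‖ ^ 2) (fun _ _ => sq_nonneg _)
            (Finset.mem_univ a))
          simp [toOp_projMat_mul_apply, hi, ha]
        · simp only [toOp_projMat_mul_apply, hi, if_false]
          simpa using Finset.sum_nonneg fun a _ => sq_nonneg _
    _ ≤ ∑ a, ‖projMat (Q a) * A‖ ^ 2 * ‖ψ‖ ^ 2 := by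
        refine Finset.sum_le_sum fun a _ => ?_
        rw [← mul_pow, ← norm_toOp]
        gcongr
        exact ContinuousLinearMap.le_opNorm _ _
    _ = _ := by rw [Finset.sum_mul]

end Projections

section Lift

theorem sum_sum_mul_update {X Y : Type*} [Fintype X] [DecidableEq X] [Fintype Y]
    (x₀ : X) (f : Option Y → ℝ) (g : (X → Option Y) → ℝ) :
    ∑ D : X → Option Y, ∑ v, f (D x₀) * g (Function.update D x₀ v) =
      (∑ v, f v) * ∑ D, g D := by
  rw [Finset.sum_mul_sum, Finset.sum_comm (s := Finset.univ (α := Option Y)),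
    ← Fintype.sum_prod_type', ← Fintype.sum_prod_type']
  refine Finset.sum_bij' (fun p _ => (Function.update p.1 x₀ p.2, p.1 x₀))
    (fun p _ => (Function.update p.1 x₀ p.2, p.1 x₀)) ?_ ?_ ?_ ?_ ?_ <;> simp

variable {X Y : Type*} [Fintype X] [DecidableEq X] [DecidableEq Y]

theorem liftMat_one (x₀ : X) : liftMat x₀ (1 : Matrix (Option Y) (Option Y) ℂ) = 1 := by
  ext D D'
  simp only [liftMat, Matrix.of_apply, Matrix.one_apply, ← ite_and]
  refine if_congr ⟨fun h => ?_, by rintro rfl; simp⟩ rfl rfl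
  ext1 a
  by_cases ha : a = x₀
  · exact ha ▸ h.2
  · exact h.1 a ha

theorem star_liftMat (x₀ : X) (m : Matrix (Option Y) (Option Y) ℂ) :
    star (liftMat x₀ m) = liftMat x₀ (star m) := by
  ext D D'
  simp only [liftMat, Matrix.star_apply, Matrix.of_apply, apply_ite star, star_zero, eq_comm]

theorem liftMat_projMat (x₀ : X) (S : Set (Option Y)) :
    liftMat x₀ (projMat S) = projMat {D : X → Option Y | D x₀ ∈ S} := by
  classical
  ext D D'
  simp only [liftMat, Matrix.of_apply, projMat_apply, Set.mem_ofPred_eq, ← ite_and]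
  refine if_congr ⟨fun h => ⟨?_, h.2.2⟩, by rintro ⟨rfl, h⟩; simp [h]⟩ rfl rfl
  ext1 a
  by_cases ha : a = x₀
  · exact ha ▸ h.2.1
  · exact h.1 a ha

variable [Fintype Y]

theorem sum_ite_agree_off_eq_sum_update {β : Type*} [AddCommMonoid β] (x₀ : X) (D : X → Option Y)
    (f : (X → Option Y) → β) :
    ∑ D', (if ∀ a, a ≠ x₀ → D a = D' a then f D' else 0) =
      ∑ v, f (Function.update D x₀ v) := by
  rw [← Finset.sum_filter]
  symm
  refine Finset.sum_bij' (fun v _ => Function.update D x₀ v) (fun D' _ => D' x₀) ?_ ?_ ?_ ?_ ?_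
  · intro v _
    simp only [Finset.mem_filter, Finset.mem_univ, true_and]
    intro a ha
    simp [ha]
  · simp
  · simp
  · intro D' hD'
    simp only [Finset.mem_filter, Finset.mem_univ, true_and] at hD'
    ext1 a
    by_cases ha : a = x₀
    · subst ha; simp
    · simp [ha, hD' a ha]
  · simp

theorem liftMat_mul (x₀ : X) (m n : Matrix (Option Y) (Option Y) ℂ) :
    liftMat x₀ m * liftMat x₀ n = liftMat x₀ (m * n) := by
  ext D D''
  simp only [Matrix.mul_apply, liftMat, Matrix.of_apply, ite_mul, zero_mul]
  rw [sum_ite_agree_off_eq_sum_update x₀ D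
    (fun D' => m (D x₀) (D' x₀) * if ∀ a, a ≠ x₀ → D' a = D'' a then n (D' x₀) (D'' x₀) else 0)]
  have h : ∀ v, (∀ a, a ≠ x₀ → Function.update D x₀ v a = D'' a) ↔ ∀ a, a ≠ x₀ → D a = D'' a :=
    fun v => forall₂_congr fun a ha => by rw [Function.update_of_ne ha]
  simp only [Function.update_self, h]
  split_ifs <;> simp

theorem toOp_liftMat_apply (x₀ : X) (m : Matrix (Option Y) (Option Y) ℂ)
    (ψ : EuclideanSpace ℂ (X → Option Y)) (D : X → Option Y) :
    toOp (liftMat x₀ m) ψ D = ∑ v, m (D x₀) v * ψ (Function.update D x₀ v) := by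
  simp only [toOp, LinearMap.coe_toContinuousLinearMap', Matrix.toLpLin_apply, Matrix.mulVec,
    dotProduct, liftMat, Matrix.of_apply, ite_mul, zero_mul]
  rw [sum_ite_agree_off_eq_sum_update x₀ D (fun D' => m (D x₀) (D' x₀) * ψ D')]
  simp

theorem sq_norm_liftMat_le (x₀ : X) (m : Matrix (Option Y) (Option Y) ℂ) :
    ‖liftMat x₀ m‖ ^ 2 ≤ ∑ u, ∑ v, ‖m u v‖ ^ 2 := by
  have h0 : 0 ≤ ∑ u, ∑ v, ‖m u v‖ ^ 2 := by positivity
  rw [← Real.le_sqrt (norm_nonneg _) h0, ← norm_toOp]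
  refine ContinuousLinearMap.opNorm_le_bound _ (Real.sqrt_nonneg _) fun ψ => ?_
  rw [← sq_le_sq₀ (norm_nonneg _) (by positivity), mul_pow, Real.sq_sqrt h0,
    EuclideanSpace.norm_sq_eq, EuclideanSpace.norm_sq_eq, ← sum_sum_mul_update x₀]
  refine Finset.sum_le_sum fun D _ => ?_
  rw [toOp_liftMat_apply, ← Finset.mul_sum]
  calc _ ≤ (∑ v, ‖m (D x₀) v‖ * ‖ψ (Function.update D x₀ v)‖) ^ 2 := by
        gcongr
        exact (norm_sum_le _ _).trans_eq (by simp)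
    _ ≤ _ := Finset.sum_mul_sq_le_sq_mul_sq _ _ _

theorem liftMat_mem_unitary (x₀ : X) {m : Matrix (Option Y) (Option Y) ℂ}
    (hm : m ∈ unitary (Matrix (Option Y) (Option Y) ℂ)) :
    liftMat x₀ m ∈ unitary (Matrix (X → Option Y) (X → Option Y) ℂ) := by
  rw [Unitary.mem_iff] at hm ⊢
  rw [star_liftMat, liftMat_mul, liftMat_mul, hm.1, hm.2, liftMat_one]
  exact ⟨rfl, rfl⟩

theorem commute_projMat_liftMat {x₀ x₁ : X} (h : x₀ ≠ x₁) (S : Set (Option Y))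
    (m : Matrix (Option Y) (Option Y) ℂ) :
    Commute (projMat {D : X → Option Y | D x₀ ∈ S}) (liftMat x₁ m) := by
  classical
  ext D D'
  rw [projMat_mul_apply, mul_projMat_apply]
  simp only [liftMat, Matrix.of_apply, Set.mem_ofPred_eq]
  by_cases hD : ∀ a, a ≠ x₁ → D a = D' a
  · simp [hD x₀ h]
  · simp [hD]

end Lift

section CompressedOracle

variable {Y : Type*} [Fintype Y] [DecidableEq Y]

theorem star_compMat : star (compMat Y) = compMat Y := by
  ext u v
  rw [Matrix.star_apply]
  rcases u with _ | a <;> rcases v with _ | b <;>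
    simp [compMat, apply_ite (starRingEnd ℂ), eq_comm]

theorem inv_sqrt_mul_inv_sqrt (x : ℝ) (hx : 0 ≤ x) :
    ((Real.sqrt x : ℝ) : ℂ)⁻¹ * ((Real.sqrt x : ℝ) : ℂ)⁻¹ = (x : ℂ)⁻¹ := by
  rw [← mul_inv, ← Complex.ofReal_mul, Real.mul_self_sqrt hx]

theorem compMat_mul_self [Nonempty Y] : compMat Y * compMat Y = 1 := by
  have hM : ((Fintype.card Y : ℕ) : ℂ) ≠ 0 := by simp
  ext u v
  rw [Matrix.mul_apply, Fintype.sum_option]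
  rcases u with _ | a <;> rcases v with _ | b
  · simp [compMat, inv_sqrt_mul_inv_sqrt, hM]
  · simp [compMat, ← Finset.mul_sum, Finset.sum_sub_distrib, hM]
  · simp [compMat, ← Finset.sum_mul, Finset.sum_sub_distrib, hM]
  · simp only [compMat, Matrix.of_apply, sub_mul, mul_sub, Finset.sum_sub_distrib, Matrix.one_apply,
      Option.some_inj]
    simp [inv_sqrt_mul_inv_sqrt, hM]

variable [AddCommGroup Y]

theorem oMat_mem_unitary (c : AddChar Y ℂ) :
    oMat c ∈ unitary (Matrix (Option Y) (Option Y) ℂ) := by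
  have h : ∀ r, (starRingEnd ℂ) (c r) * c r = 1 := fun r => by
    rw [← Complex.normSq_eq_conj_mul_self, Complex.normSq_eq_norm_sq, AddChar.norm_apply]
    simp
  rw [Unitary.mem_iff]
  constructor <;>
  · simp only [oMat, Matrix.star_eq_conjTranspose, Matrix.diagonal_conjTranspose,
      Matrix.diagonal_mul_diagonal]
    rw [← Matrix.diagonal_one]
    congr 1
    ext1 u
    rcases u with _ | r
    · simp
    · simp [h, mul_comm (c r)]

theorem cOMat_mem_unitary (c : AddChar Y ℂ) :
    cOMat c ∈ unitary (Matrix (Option Y) (Option Y) ℂ) := by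
  have h : compMat Y ∈ unitary (Matrix (Option Y) (Option Y) ℂ) := by
    rw [Unitary.mem_iff, star_compMat]
    exact ⟨compMat_mul_self, compMat_mul_self⟩
  exact mul_mem (mul_mem h (oMat_mem_unitary c)) h

theorem cOMat_apply (c : AddChar Y ℂ) (u v : Option Y) :
    cOMat c u v = compMat Y u none * compMat Y none v +
      ∑ w, compMat Y u (some w) * c w * compMat Y (some w) v := by
  rw [cOMat, Matrix.mul_apply, Fintype.sum_option]
  simp [oMat, Matrix.mul_diagonal]

theorem cOMat_some_none (c : AddChar Y ℂ) (r : Y) :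
    cOMat c (some r) none =
      (c r - (Fintype.card Y : ℂ)⁻¹ * ∑ w, c w) * ((Real.sqrt (Fintype.card Y) : ℝ) : ℂ)⁻¹ := by
  rw [cOMat_apply, Finset.mul_sum]
  simp [compMat, ← Finset.sum_mul, sub_mul, Finset.sum_sub_distrib]

theorem cOMat_some_some_of_ne (c : AddChar Y ℂ) {r u : Y} (h : r ≠ u) :
    cOMat c (some r) (some u) = (Fintype.card Y : ℂ)⁻¹ *
      (1 - c r - c u + (Fintype.card Y : ℂ)⁻¹ * ∑ w, c w) := by
  rw [cOMat_apply, Finset.mul_sum]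
  simp only [compMat, Matrix.of_apply, sub_mul, mul_sub, Finset.sum_sub_distrib]
  simp [inv_sqrt_mul_inv_sqrt, h, mul_add, mul_sub, Finset.mul_sum]
  rw [Finset.sum_congr rfl fun w _ => show (Fintype.card Y : ℂ)⁻¹ * c w * (Fintype.card Y : ℂ)⁻¹ =
    (Fintype.card Y : ℂ)⁻¹ * ((Fintype.card Y : ℂ)⁻¹ * c w) by ring]
  ring

theorem cOMat_zero : cOMat (0 : AddChar Y ℂ) = 1 := by
  have h : oMat (0 : AddChar Y ℂ) = 1 := by
    rw [oMat, ← Matrix.diagonal_one]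
    congr 1
    ext1 u
    rcases u with _ | r <;> simp
  rw [cOMat, h, mul_one, compMat_mul_self]

theorem sq_norm_cOMat_some_none_le (c : AddChar Y ℂ) (r : Y) :
    ‖cOMat c (some r) none‖ ^ 2 ≤ (Fintype.card Y : ℝ)⁻¹ := by
  by_cases hc : c = 0
  · rw [hc, cOMat_zero]
    simp
  · rw [cOMat_some_none, AddChar.sum_eq_zero_iff_ne_zero.2 hc]
    simp [AddChar.norm_apply]

theorem norm_cOMat_some_some_le (c : AddChar Y ℂ) {r u : Y} (h : r ≠ u) :
    ‖cOMat c (some r) (some u)‖ ≤ (Fintype.card Y : ℝ)⁻¹ * 3 := by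
  by_cases hc : c = 0
  · rw [hc, cOMat_zero, Matrix.one_apply_ne (by simpa using h)]
    simp
  · rw [cOMat_some_some_of_ne c h, AddChar.sum_eq_zero_iff_ne_zero.2 hc, norm_mul]
    simp only [norm_inv, Complex.norm_natCast, mul_zero, add_zero]
    gcongr
    calc ‖1 - c r - c u‖ ≤ ‖(1 : ℂ)‖ + ‖c r‖ + ‖c u‖ :=
          (norm_sub_le _ _).trans (by gcongr; exact norm_sub_le _ _)
      _ = 3 := by simp only [norm_one, AddChar.norm_apply]; norm_num

theorem sum_sq_norm_projMat_cOMat_le (c : AddChar Y ℂ) (S : Set (Option Y)) (hS : none ∉ S) :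
    ∑ u, ∑ v, ‖(projMat S * cOMat c * projMat Sᶜ) u v‖ ^ 2 ≤
      10 * (({y : Y | some y ∈ S}.ncard : ℝ) / Fintype.card Y) := by
  classical
  set M : ℝ := (Fintype.card Y : ℝ) with hMdef
  have hM : M ≠ 0 := by simp [hMdef]
  have hrow : ∀ r : Y, ∑ v, ‖(projMat S * cOMat c * projMat Sᶜ) (some r) v‖ ^ 2 ≤
      if some r ∈ S then 10 * M⁻¹ else 0 := by
    intro r
    simp only [mul_projMat_apply, projMat_mul_apply]
    split_ifs with hr
    · rw [Fintype.sum_option]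
      calc _ ≤ M⁻¹ + ∑ _u : Y, (M⁻¹ * 3) ^ 2 := by
            refine add_le_add ?_ (Finset.sum_le_sum fun u _ => ?_)
            · simpa [hS] using sq_norm_cOMat_some_none_le c r
            · split_ifs with hu
              · gcongr
                exact norm_cOMat_some_some_le c fun h => hu (h ▸ hr)
              · rw [norm_zero, zero_pow two_ne_zero]
                positivity
        _ = 10 * M⁻¹ := by
            rw [Finset.sum_const, Finset.card_univ, nsmul_eq_mul, ← hMdef]
            field_simp
            norm_num
    · simp
  rw [Fintype.sum_option]
  have h0 : ∑ v, ‖(projMat S * cOMat c * projMat Sᶜ) none v‖ ^ 2 = 0 := by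
    simp [mul_projMat_apply, projMat_mul_apply, hS]
  rw [h0, zero_add]
  refine (Finset.sum_le_sum fun r _ => hrow r).trans_eq ?_
  rw [← Finset.sum_filter, Finset.sum_const, nsmul_eq_mul, Set.ncard_eq_toFinset_card']
  simp only [Set.toFinset_ofPred]
  ring

end CompressedOracle

section ParallelQueries

variable {X Y : Type*} [Fintype X] [DecidableEq X] [Fintype Y] [DecidableEq Y] [AddCommGroup Y]
  {k : ℕ}

theorem norm_prod_liftMat_le_one (x : Fin k → X) (c : Fin k → AddChar Y ℂ) (l : List (Fin k)) :
    ‖(l.map fun i => liftMat (x i) (cOMat (c i))).prod‖ ≤ 1 := by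
  refine norm_le_one_of_mem_unitary (list_prod_mem fun U hU => ?_)
  obtain ⟨i, -, rfl⟩ := List.mem_map.1 hU
  exact liftMat_mem_unitary _ (cOMat_mem_unitary _)

theorem commute_projMat_prod_liftMat {x : Fin k → X} (hx : Function.Injective x)
    (c : Fin k → AddChar Y ℂ) (S : Set (Option Y)) {i : Fin k} {l : List (Fin k)} (hi : i ∉ l) :
    Commute (projMat {D : X → Option Y | D (x i) ∈ S})
      (l.map fun i => liftMat (x i) (cOMat (c i))).prod := by
  refine Commute.list_prod_right _ _ fun U hU => ?_
  obtain ⟨j, hj, rfl⟩ := List.mem_map.1 hU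
  exact commute_projMat_liftMat (fun h => hi (by rwa [hx h])) _ _

theorem sq_norm_projMat_cOparMat_le {x : Fin k → X} (hx : Function.Injective x)
    (c : Fin k → AddChar Y ℂ) (i : Fin k) {S : Set (Option Y)} (hS : none ∉ S)
    {N : Set (X → Option Y)} (hN : ∀ D ∈ N, D (x i) ∉ S) :
    ‖projMat {D : X → Option Y | D (x i) ∈ S} * (cOparMat x c * projMat N)‖ ^ 2 ≤
      10 * (({y : Y | some y ∈ S}.ncard : ℝ) / Fintype.card Y) := by
  obtain ⟨s, t, hst⟩ := List.append_of_mem (List.mem_finRange i)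
  have hnd := List.nodup_finRange k
  rw [hst, List.nodup_append, List.nodup_cons] at hnd
  have hs : i ∉ s := fun h => hnd.2.2 i h i (by simp) rfl
  have ht : i ∉ t := hnd.2.1.1
  set L := (s.map fun i => liftMat (x i) (cOMat (c i))).prod
  set R := (t.map fun i => liftMat (x i) (cOMat (c i))).prod
  have hprod : cOparMat x c = L * (liftMat (x i) (cOMat (c i)) * R) := by
    rw [cOparMat, List.ofFn_eq_map, hst, List.map_append, List.prod_append, List.map_cons,
      List.prod_cons]
  set p := projMat {D : X → Option Y | D (x i) ∈ S} with hp
  set q := projMat {D : X → Option Y | D (x i) ∈ Sᶜ} with hq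
  set U := liftMat (x i) (cOMat (c i))
  have hqN : q * projMat N = projMat N := projMat_mul_projMat_of_subset hN
  have hpL : p * L = L * p := (commute_projMat_prod_liftMat hx c S hs).eq
  have hqR : q * R = R * q := (commute_projMat_prod_liftMat hx c Sᶜ ht).eq
  have key : p * (cOparMat x c * projMat N) =
      L * liftMat (x i) (projMat S * cOMat (c i) * projMat Sᶜ) * R * projMat N := by
    rw [hprod, ← liftMat_mul, ← liftMat_mul, liftMat_projMat, liftMat_projMat, ← hp, ← hq]
    calc p * (L * (U * R) * projMat N) = p * L * U * R * (q * projMat N) := by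
          rw [hqN]
          simp only [mul_assoc]
      _ = L * p * U * (R * q) * projMat N := by
          rw [hpL]
          simp only [mul_assoc]
      _ = L * (p * U * q) * R * projMat N := by
          rw [← hqR]
          simp only [mul_assoc]
  rw [key]
  refine le_trans ?_ ((sq_norm_liftMat_le (x i) _).trans (sum_sq_norm_projMat_cOMat_le (c i) S hS))
  gcongr
  set T := liftMat (x i) (projMat S * cOMat (c i) * projMat Sᶜ)
  calc ‖L * T * R * projMat N‖ ≤ ‖L‖ * ‖T‖ * ‖R‖ * ‖projMat N‖ := by
        refine (norm_mul_le _ _).trans ?_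
        gcongr
        refine (norm_mul_le _ _).trans ?_
        gcongr
        exact norm_mul_le _ _
    _ ≤ 1 * ‖T‖ * 1 * 1 := by
        gcongr
        · exact norm_prod_liftMat_le_one x c s
        · exact norm_prod_liftMat_le_one x c t
        · exact norm_projMat_le_one N
    _ = ‖T‖ := by ring

theorem dbUpdate_comp_eq_self {X Y : Type*} {D D' : X → Option Y} {x : Fin k → X}
    (h : D' ∈ agreeOff D x) : dbUpdate D x (D' ∘ x) = D' := by
  ext1 a
  rw [dbUpdate]
  split_ifs with ha
  · exact congrArg D' ha.choose_spec
  · exact (h a fun i hi => ha ⟨i, hi⟩).symm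

end ParallelQueries

end TransitionCapacityBounds

open Classical in
theorem stmt_8 {X Y : Type*} [Fintype X] [DecidableEq X] [Nonempty X]
    [Fintype Y] [DecidableEq Y] [AddCommGroup Y]
    (k : ℕ) (hk : 1 ≤ k) (P P' : Set (X → Option Y))
    -- the 1-local properties `L_i^{x,D}`, given as subsets `S x D i ⊆ Ȳ`
    (S : (Fin k → X) → (X → Option Y) → Fin k → Set (Option Y))
    -- if `⊥ ∈ S_i^{x,D}` then `S_i^{x,D} = Ȳ`
    (hbot : ∀ (x : Fin k → X) (D : X → Option Y) (i : Fin k), Function.Injective x →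
      none ∈ S x D i → S x D i = Set.univ)
    -- (i)
    (h1 : ∀ (x : Fin k → X) (D : X → Option Y) (r : Fin k → Option Y),
      Function.Injective x → dbUpdate D x r ∈ P' → ∃ i, r i ∈ S x D i)
    -- (ii)
    (h2 : ∀ (x : Fin k → X) (D : X → Option Y) (r : Fin k → Option Y),
      Function.Injective x → (∃ i, r i ∈ S x D i) → dbUpdate D x r ∈ P) :
    qtc Pᶜ P' k Set.univ ≤
      sSup {v : ℝ | ∃ (x : Fin k → X) (D : X → Option Y), Function.Injective x ∧
        v = Real.sqrt (10 * ∑ i : Fin k,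
          (if S x D i = ∅ ∨ S x D i = Set.univ then (0 : ℝ)
           else ({y : Y | some y ∈ S x D i}.ncard : ℝ) / Fintype.card Y))} := by
  refine Real.sSup_le ?_ (Real.sSup_nonneg ?_)
  swap
  · rintro v ⟨x, D, -, rfl⟩
    exact Real.sqrt_nonneg _
  rintro v ⟨x, c, D, hx, -, rfl⟩
  refine le_trans ?_ (le_csSup (Set.Finite.bddAbove ?_) ⟨x, D, hx, rfl⟩)
  swap
  · refine (Set.finite_range fun p : (Fin k → X) × (X → Option Y) =>
      Real.sqrt (10 * ∑ i : Fin k, (if S p.1 p.2 i = ∅ ∨ S p.1 p.2 i = Set.univ then (0 : ℝ)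
        else ({y : Y | some y ∈ S p.1 p.2 i}.ncard : ℝ) / Fintype.card Y))).subset ?_
    rintro v ⟨x, D, -, rfl⟩
    exact ⟨(x, D), rfl⟩
  have hN : ∀ D' ∈ Pᶜ ∩ agreeOff D x, ∀ i, D' (x i) ∉ S x D i := by
    rintro D' ⟨hP, hD'⟩ i hi
    exact hP (dbUpdate_comp_eq_self hD' ▸ h2 x D (D' ∘ x) hx ⟨i, hi⟩)
  rw [← toOp_mul, ← toOp_mul, norm_toOp]
  by_cases hnone : ∃ i, none ∈ S x D i
  · obtain ⟨i, hi⟩ := hnone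
    have hempty : Pᶜ ∩ agreeOff D x = ∅ := by
      refine Set.eq_empty_of_forall_notMem fun D' hD' => hN D' hD' i ?_
      rw [hbot x D i hx hi]
      trivial
    have hzero : projMat (∅ : Set (X → Option Y)) = 0 := by
      ext
      simp [projMat_apply]
    open scoped Matrix.Norms.L2Operator in
    rw [hempty, hzero, mul_zero, mul_zero, norm_zero]
    exact Real.sqrt_nonneg _
  · push Not at hnone
    refine Real.le_sqrt_of_sq_le ?_
    refine (sq_norm_projMat_mul_le_sum _ (fun i => {D' : X → Option Y | D' (x i) ∈ S x D i})
      ?_ _).trans ?_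
    · rintro D' ⟨hP', hD'⟩
      rw [← dbUpdate_comp_eq_self hD'] at hP'
      exact Set.mem_iUnion.2 (h1 x D _ hx hP')
    · rw [Finset.mul_sum]
      refine Finset.sum_le_sum fun i _ => ?_
      refine (sq_norm_projMat_cOparMat_le hx c i (hnone i) fun D' hD' => hN D' hD' i).trans ?_
      have huniv : S x D i ≠ Set.univ := fun h => hnone i (h ▸ Set.mem_univ _)
      by_cases hS : S x D i = ∅
      · simp [hS]
      · simp [hS, huniv]
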